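/- (First integral of the Lax pair for discrete O surfaces.) Let X⃗, Y⃗ : ℤ² → ℝ³ and H⃗, K⃗ : ℤ² → ℝⁿ, where ℝⁿ carries a symmetric bilinear form ⟨·,·⟩ given by a constant symmetric matrix S, let λ ∈ ℝ, and suppose M⃗ : ℤ² → ℝ³ and M⃗* : ℤ² → ℝⁿ satisfy M⃗₍₁₎ − M⃗ = X⃗·H, M⃗₍₂₎ − M⃗ = Y⃗·K, M⃗*₍₁₎ − M⃗* = X·H⃗, M⃗*₍₂₎ − M⃗* = Y·K⃗, where the scalars are defined by X = (M⃗₍₁₎ + M⃗)·X⃗, Y = (M⃗₍₂₎ + M⃗)·Y⃗, H = λ⟨M⃗*₍₁₎ + M⃗*, H⃗⟩, K = λ⟨M⃗*₍₂₎ + M⃗*, K⃗⟩. Then the quantity ‖M⃗‖² − λ⟨M⃗*, M⃗*⟩ is constant on ℤ², i.e. (‖M⃗‖² − λ⟨M⃗*, M⃗*⟩)₍₁₎ = ‖M⃗‖² − λ⟨M⃗*, M⃗*⟩ and (‖M⃗‖² − λ⟨M⃗*, M⃗*⟩)₍₂₎ = ‖M⃗‖² − λ⟨M⃗*, M⃗*⟩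 at every lattice point. -/

import Mathlib

/-!
For a symmetric bilinear form, `⟨a, a⟩ - ⟨b, b⟩ = ⟨a + b, a - b⟩`. Along one lattice step the
differences are `M₍₁₎ - M = H X⃗` and `M*₍₁₎ - M* = X H⃗`, so `‖M‖²` changes by
`H ((M₍₁₎ + M) · X⃗) = H X` and `λ⟨M*, M*⟩` by `X (λ⟨M*₍₁₎ + M*, H⃗⟩) = X H`: the two changes cancel.
Both directions are instances of `step_invariant`.
-/

noncomputable section

/-- Shift in the first lattice direction: `f₍₁₎(n₁,n₂) = f(n₁+1,n₂)`. -/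
def s1 (n : ℤ × ℤ) : ℤ × ℤ := (n.1 + 1, n.2)

/-- Shift in the second lattice direction: `f₍₂₎(n₁,n₂) = f(n₁,n₂+1)`. -/
def s2 (n : ℤ × ℤ) : ℤ × ℤ := (n.1, n.2 + 1)

/-- Euclidean inner product on ℝ³. -/
def dot3 (u v : Fin 3 → ℝ) : ℝ := ∑ i, u i * v i

/-- The bilinear form `⟨u, v⟩ = u S vᵀ` on row vectors in ℝⁿ given by a matrix `S`. -/
def formS {nn : ℕ} (S : Matrix (Fin nn) (Fin nn) ℝ) (u v : Fin nn → ℝ) : ℝ :=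
  ∑ i, ∑ j, u i * S i j * v j

theorem dot3_self_sub_self (a b : Fin 3 → ℝ) :
    dot3 a a - dot3 b b = dot3 (a + b) (a - b) := by
  simp only [dot3, ← Finset.sum_sub_distrib, Pi.add_apply, Pi.sub_apply]
  exact Finset.sum_congr rfl fun i _ => by ring

theorem dot3_smul_right (c : ℝ) (u v : Fin 3 → ℝ) : dot3 u (c • v) = c * dot3 u v := by
  simp only [dot3, Finset.mul_sum, Pi.smul_apply, smul_eq_mul]
  exact Finset.sum_congr rfl fun i _ => by ring

theorem formS_comm {nn : ℕ} {S : Matrix (Fin nn) (Fin nn) ℝ} (hS : S.IsSymm)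
    (u v : Fin nn → ℝ) : formS S u v = formS S v u := by
  unfold formS
  rw [Finset.sum_comm]
  refine Finset.sum_congr rfl fun i _ => Finset.sum_congr rfl fun j _ => ?_
  rw [hS.apply i j]
  ring

theorem formS_self_sub_self {nn : ℕ} {S : Matrix (Fin nn) (Fin nn) ℝ} (hS : S.IsSymm)
    (a b : Fin nn → ℝ) : formS S a a - formS S b b = formS S (a + b) (a - b) := by
  have expand : formS S (a + b) (a - b)
      = formS S a a - formS S a b + formS S b a - formS S b b := by
    simp only [formS, ← Finset.sum_sub_distrib, ← Finset.sum_add_distrib, Pi.add_apply,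
      Pi.sub_apply]
    exact Finset.sum_congr rfl fun i _ => Finset.sum_congr rfl fun j _ => by ring
  rw [expand, formS_comm hS a b]
  ring

theorem formS_smul_right {nn : ℕ} (S : Matrix (Fin nn) (Fin nn) ℝ) (c : ℝ)
    (u v : Fin nn → ℝ) : formS S u (c • v) = c * formS S u v := by
  simp only [formS, Finset.mul_sum, Pi.smul_apply, smul_eq_mul]
  exact Finset.sum_congr rfl fun i _ => Finset.sum_congr rfl fun j _ => by ring

/-- Invariance under a single lattice step from `(m, p)` to `(m', p')`, where `m`, `p` are the
values of `M` and `M*`. -/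
theorem step_invariant {nn : ℕ} {S : Matrix (Fin nn) (Fin nn) ℝ} (hS : S.IsSymm) {lam x h : ℝ}
    {m m' xv : Fin 3 → ℝ} {p p' hv : Fin nn → ℝ}
    (hx : x = dot3 (m' + m) xv) (hh : h = lam * formS S (p' + p) hv)
    (hm : m' - m = h • xv) (hp : p' - p = x • hv) :
    dot3 m' m' - lam * formS S p' p' = dot3 m m - lam * formS S p p := by
  have hM : dot3 m' m' - dot3 m m = h * x := by
    rw [dot3_self_sub_self, hm, dot3_smul_right, ← hx]
  have hP : formS S p' p' - formS S p p = x * formS S (p' + p) hv := by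
    rw [formS_self_sub_self hS, hp, formS_smul_right]
  linear_combination hM - lam * hP + x * hh

/-- first integral of the Lax pair for discrete O surfaces: the quantity
`‖M⃗‖² − λ⟨M⃗*, M⃗*⟩` is constant on the lattice. -/
theorem stmt_15 {nn : ℕ} (S : Matrix (Fin nn) (Fin nn) ℝ) (hS : S.IsSymm)
    (Xv Yv : ℤ × ℤ → Fin 3 → ℝ) (Hv Kv : ℤ × ℤ → Fin nn → ℝ) (lam : ℝ)
    (Mv : ℤ × ℤ → Fin 3 → ℝ) (Ms : ℤ × ℤ → Fin nn → ℝ) (X Y H K : ℤ × ℤ → ℝ)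
    (hXdef : ∀ n, X n = dot3 (Mv (s1 n) + Mv n) (Xv n))
    (hYdef : ∀ n, Y n = dot3 (Mv (s2 n) + Mv n) (Yv n))
    (hHdef : ∀ n, H n = lam * formS S (Ms (s1 n) + Ms n) (Hv n))
    (hKdef : ∀ n, K n = lam * formS S (Ms (s2 n) + Ms n) (Kv n))
    (hMv1 : ∀ n, Mv (s1 n) - Mv n = H n • Xv n)
    (hMv2 : ∀ n, Mv (s2 n) - Mv n = K n • Yv n)
    (hMs1 : ∀ n, Ms (s1 n) - Ms n = X n • Hv n)
    (hMs2 : ∀ n, Ms (s2 n) - Ms n = Y n • Kv n) :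
    ∀ n, dot3 (Mv (s1 n)) (Mv (s1 n)) - lam * formS S (Ms (s1 n)) (Ms (s1 n)) =
        dot3 (Mv n) (Mv n) - lam * formS S (Ms n) (Ms n) ∧
      dot3 (Mv (s2 n)) (Mv (s2 n)) - lam * formS S (Ms (s2 n)) (Ms (s2 n)) =
        dot3 (Mv n) (Mv n) - lam * formS S (Ms n) (Ms n) := by
  intro n
  exact ⟨step_invariant hS (hXdef n) (hHdef n) (hMv1 n) (hMs1 n),
    step_invariant hS (hYdef n) (hKdef n) (hMv2 n) (hMs2 n)⟩
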